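/- There exist constants c > 0 and C > 0 such that for every sign σ ∈ {+1,−1} and all integers n₁, n₂ with n₀ := n₁ − n₂ ≠ 0 and n₁ + n₂ + σ·sgn(n₀) ≠ 0, one has c · ⟨n₀⟩ · ⟨n₁+n₂⟩ ≤ ⟨ n₁² − n₂² + σ⟨n₀⟩ ⟩ ≤ C · ⟨n₀⟩ · ⟨n₁+n₂⟩. -/

import Mathlib

/-- `⟨x⟩ = (1+x²)^{1/2}`. -/
noncomputable def jbR (x : ℝ) : ℝ := Real.sqrt (1 + x ^ 2)

/-!
With `d = n₁ - n₂`, `s = n₁ + n₂` and `k = s + σ sgn d`, the phase is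
`d s + σ⟨d⟩ = d k + σ(⟨d⟩ - |d|)`. Since `⟨d⟩ - |d| ≤ 1 / (2|d|) ≤ 1 / 2` and `|d k| ≥ 1`,
the second term takes away at most half of the first, while `⟨d⟩⟨s⟩ ≲ ⟨d⟩⟨k⟩ ≲ |d k|` because
`|s - k| ≤ 1 ≤ ⟨k⟩`. The upper bound only uses `⟨x + y⟩ ≤ ⟨x⟩ + |y|` and `⟨x y⟩ ≤ ⟨x⟩⟨y⟩`.
-/

section JapaneseBracket

variable (x y : ℝ)

theorem jbR_sq : jbR x ^ 2 = 1 + x ^ 2 :=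
  Real.sq_sqrt (by positivity)

theorem jbR_nonneg : 0 ≤ jbR x :=
  Real.sqrt_nonneg _

theorem one_le_jbR : 1 ≤ jbR x :=
  Real.one_le_sqrt.2 (le_add_of_nonneg_right (sq_nonneg x))

theorem abs_le_jbR : |x| ≤ jbR x :=
  Real.abs_le_sqrt (le_add_of_nonneg_left zero_le_one)

theorem jbR_add_le : jbR (x + y) ≤ jbR x + |y| := by
  have cross_term : x * y ≤ jbR x * |y| :=
    calc x * y ≤ |x| * |y| := (le_abs_self _).trans (abs_mul x y).le
      _ ≤ jbR x * |y| := mul_le_mul_of_nonneg_right (abs_le_jbR x) (abs_nonneg y)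
  refine Real.sqrt_le_iff.2 ⟨add_nonneg (jbR_nonneg x) (abs_nonneg y), ?_⟩
  calc 1 + (x + y) ^ 2 = (1 + x ^ 2) + 2 * (x * y) + y ^ 2 := by ring
    _ ≤ (1 + x ^ 2) + 2 * (jbR x * |y|) + y ^ 2 := by gcongr
    _ = (jbR x + |y|) ^ 2 := by rw [← jbR_sq x, ← sq_abs y]; ring

theorem jbR_mul_le : jbR (x * y) ≤ jbR x * jbR y := by
  refine Real.sqrt_le_iff.2 ⟨mul_nonneg (jbR_nonneg x) (jbR_nonneg y), ?_⟩
  rw [mul_pow, mul_pow, jbR_sq, jbR_sq]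
  nlinarith only [sq_nonneg x, sq_nonneg y]

variable {x y}

theorem jbR_le_abs_add_inv (hx : x ≠ 0) : jbR x ≤ |x| + (2 * |x|)⁻¹ := by
  refine Real.sqrt_le_iff.2 ⟨by positivity, ?_⟩
  calc 1 + x ^ 2 = |x| ^ 2 + 2 * |x| * (2 * |x|)⁻¹ := by
        rw [mul_inv_cancel₀ (by positivity), sq_abs, add_comm]
    _ ≤ |x| ^ 2 + 2 * |x| * (2 * |x|)⁻¹ + (2 * |x|)⁻¹ ^ 2 :=
        le_add_of_nonneg_right (sq_nonneg _)
    _ = (|x| + (2 * |x|)⁻¹) ^ 2 := by ring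

theorem jbR_le_sqrt_two_mul_abs (hx : 1 ≤ |x|) : jbR x ≤ √2 * |x| := by
  rw [← Real.sqrt_sq_eq_abs, ← Real.sqrt_mul zero_le_two]
  exact Real.sqrt_le_sqrt (by linarith [(one_le_sq_iff_one_le_abs x).2 hx])

theorem jbR_mul_jbR_le_two_mul_abs (hx : 1 ≤ |x|) (hy : 1 ≤ |y|) :
    jbR x * jbR y ≤ 2 * |x * y| :=
  calc jbR x * jbR y ≤ (√2 * |x|) * (√2 * |y|) :=
        mul_le_mul (jbR_le_sqrt_two_mul_abs hx) (jbR_le_sqrt_two_mul_abs hy)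
          (jbR_nonneg y) (by positivity)
    _ = 2 * |x * y| := by
        rw [mul_mul_mul_comm, Real.mul_self_sqrt zero_le_two, abs_mul]

end JapaneseBracket

theorem abs_coe_signType_le_one {R : Type*} [Ring R] [LinearOrder R] [IsOrderedRing R]
    (a : SignType) : |(a : R)| ≤ 1 := by
  cases a <;> simp

theorem one_le_abs_intCast {R : Type*} [Ring R] [LinearOrder R] [IsStrictOrderedRing R]
    {m : ℤ} (hm : m ≠ 0) : 1 ≤ |(m : R)| := by
  exact_mod_cast Int.one_le_abs hm

section Phase

variable (σ d s : ℝ)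

theorem jbR_mul_add_mul_jbR_le :
    jbR (d * s + σ * jbR d) ≤ (1 + |σ|) * jbR d * jbR s :=
  calc jbR (d * s + σ * jbR d) ≤ jbR (d * s) + |σ * jbR d| := jbR_add_le _ _
    _ = jbR (d * s) + |σ| * jbR d * 1 := by
        rw [abs_mul, abs_of_nonneg (jbR_nonneg d), mul_one]
    _ ≤ jbR d * jbR s + |σ| * jbR d * jbR s :=
        add_le_add (jbR_mul_le d s) (mul_le_mul_of_nonneg_left (one_le_jbR s)
          (mul_nonneg (abs_nonneg σ) (jbR_nonneg d)))
    _ = (1 + |σ|) * jbR d * jbR s := by ring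

theorem mul_add_mul_jbR_eq :
    d * s + σ * jbR d = d * (s + σ * SignType.sign d) + σ * (jbR d - |d|) := by
  rw [← self_mul_sign]
  ring

variable {σ d s}

theorem abs_mul_le_two_mul_abs_mul_add_mul_jbR (hσ : |σ| ≤ 1) (hd : 1 ≤ |d|)
    (hs : 1 ≤ |s + σ * SignType.sign d|) :
    |d * (s + σ * SignType.sign d)| ≤ 2 * |d * s + σ * jbR d| := by
  have main_term : 1 ≤ |d * (s + σ * SignType.sign d)| := by
    rw [abs_mul]
    exact one_le_mul_of_one_le_of_one_le hd hs
  have bracket_gap : |(jbR d - |d|)| ≤ 1 / 2 := by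
    rw [abs_of_nonneg (sub_nonneg.2 (abs_le_jbR d)), sub_le_iff_le_add']
    have inv_le : (2 * |d|)⁻¹ ≤ 1 / 2 := by
      rw [one_div]
      exact inv_anti₀ two_pos (by linarith)
    linarith [jbR_le_abs_add_inv (abs_pos.1 (one_pos.trans_le hd))]
  have error_term : |σ * (jbR d - |d|)| ≤ 1 / 2 := by
    rw [abs_mul]
    exact (mul_le_of_le_one_left (abs_nonneg _) hσ).trans bracket_gap
  rw [mul_add_mul_jbR_eq]
  linarith [abs_sub_abs_le_abs_add (d * (s + σ * SignType.sign d)) (σ * (jbR d - |d|))]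

theorem jbR_mul_jbR_le_abs_mul_add_mul_jbR (hσ : |σ| ≤ 1) (hd : 1 ≤ |d|)
    (hs : 1 ≤ |s + σ * SignType.sign d|) :
    jbR d * jbR s ≤ 8 * |d * s + σ * jbR d| := by
  set k := s + σ * SignType.sign d with hk
  have abs_shift_le : |-(σ * SignType.sign d)| ≤ 1 := by
    rw [abs_neg, abs_mul]
    exact mul_le_one₀ hσ (abs_nonneg _) (abs_coe_signType_le_one _)
  have jbR_shift : jbR s ≤ 2 * jbR k := by
    calc jbR s = jbR (k + -(σ * SignType.sign d)) := by rw [hk, add_neg_cancel_right]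
      _ ≤ jbR k + |-(σ * SignType.sign d)| := jbR_add_le _ _
      _ ≤ 2 * jbR k := by linarith [one_le_jbR k]
  calc jbR d * jbR s ≤ jbR d * (2 * jbR k) :=
        mul_le_mul_of_nonneg_left jbR_shift (jbR_nonneg d)
    _ = 2 * (jbR d * jbR k) := by ring
    _ ≤ 2 * (2 * |d * k|) := by linarith [jbR_mul_jbR_le_two_mul_abs hd hs]
    _ ≤ 2 * (2 * (2 * |d * s + σ * jbR d|)) := by
        linarith [abs_mul_le_two_mul_abs_mul_add_mul_jbR hσ hd hs]
    _ = 8 * |d * s + σ * jbR d| := by ring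

end Phase

theorem Zakharov_phase_factorization_general {σ n₁ n₂ : ℝ} (hσ : |σ| ≤ 1)
    (hd : 1 ≤ |n₁ - n₂|) (hs : 1 ≤ |n₁ + n₂ + σ * SignType.sign (n₁ - n₂)|) :
    1 / 8 * jbR (n₁ - n₂) * jbR (n₁ + n₂) ≤ jbR (n₁ ^ 2 - n₂ ^ 2 + σ * jbR (n₁ - n₂)) ∧
      jbR (n₁ ^ 2 - n₂ ^ 2 + σ * jbR (n₁ - n₂)) ≤ 2 * jbR (n₁ - n₂) * jbR (n₁ + n₂) := by
  rw [sq_sub_sq, mul_comm (n₁ + n₂)]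
  constructor
  · linarith [jbR_mul_jbR_le_abs_mul_add_mul_jbR hσ hd hs,
      abs_le_jbR ((n₁ - n₂) * (n₁ + n₂) + σ * jbR (n₁ - n₂))]
  · have d_nonneg := jbR_nonneg (n₁ - n₂)
    have s_nonneg := jbR_nonneg (n₁ + n₂)
    calc jbR ((n₁ - n₂) * (n₁ + n₂) + σ * jbR (n₁ - n₂))
        ≤ (1 + |σ|) * jbR (n₁ - n₂) * jbR (n₁ + n₂) := jbR_mul_add_mul_jbR_le _ _ _
      _ ≤ 2 * jbR (n₁ - n₂) * jbR (n₁ + n₂) := by gcongr; linarith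

/-- Factorization of the Zakharov phase: there are `c, C > 0` such that
for every sign `σ ∈ {±1}` and all integers `n₁, n₂` with `n₀ := n₁ - n₂ ≠ 0` and
`n₁ + n₂ + σ sgn(n₀) ≠ 0`, one has
`c ⟨n₀⟩ ⟨n₁+n₂⟩ ≤ ⟨n₁² - n₂² + σ⟨n₀⟩⟩ ≤ C ⟨n₀⟩ ⟨n₁+n₂⟩`. -/
theorem Zakharov_phase_factorization :
    ∃ c C : ℝ, 0 < c ∧ 0 < C ∧
      ∀ σ : ℤ, (σ = 1 ∨ σ = -1) →
        ∀ n₁ n₂ : ℤ, n₁ - n₂ ≠ 0 → n₁ + n₂ + σ * Int.sign (n₁ - n₂) ≠ 0 →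
          c * jbR ((n₁ - n₂ : ℤ) : ℝ) * jbR ((n₁ + n₂ : ℤ) : ℝ)
              ≤ jbR (((n₁ ^ 2 - n₂ ^ 2 : ℤ) : ℝ) + (σ : ℝ) * jbR ((n₁ - n₂ : ℤ) : ℝ)) ∧
            jbR (((n₁ ^ 2 - n₂ ^ 2 : ℤ) : ℝ) + (σ : ℝ) * jbR ((n₁ - n₂ : ℤ) : ℝ))
              ≤ C * jbR ((n₁ - n₂ : ℤ) : ℝ) * jbR ((n₁ + n₂ : ℤ) : ℝ) := by
  refine ⟨1 / 8, 2, by norm_num, by norm_num, fun σ hσ n₁ n₂ hd hs ↦ ?_⟩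
  have abs_σ_le_one : |(σ : ℝ)| ≤ 1 := by rcases hσ with rfl | rfl <;> simp
  simpa using Zakharov_phase_factorization_general (n₁ := n₁) (n₂ := n₂) abs_σ_le_one
    (by simpa using one_le_abs_intCast (R := ℝ) hd)
    (by simpa [Int.sign_eq_sign, ← sign_intCast (α := ℝ)] using one_le_abs_intCast (R := ℝ) hs)
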